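/- Let H > 0 and M ∈ ℂ with 2M ≠ H. Then for every z ∈ (0,1): ₂F₁(3/2 − M/H, 3/2 − M/H; 2; z) = −(2H / ((z−1)·z·(H−2M)²)) · [ (H + 2M)·₂F₁(−1/2 − M/H, 1/2 − M/H; 1; z) + (H(z−1) − 2M(z+1))·₂F₁(1/2 − M/H, 1/2 − M/H; 1; z) ]. -/

import Mathlib

/-!
Put `a = 1/2 - M/H`. After clearing denominators the claim becomes
`z (1 - z) a² F(a+1,a+1;2;z) = (1 - a) F(a-1,a;1;z) + (a z - (1 - a)) F(a,a;1;z)`,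
which is proved by comparing power series. If `uₙ = ((a)ₙ / n!)²` are the coefficients of
`F(a,a;1;·)`, then `a² F(a+1,a+1;2;·)` has coefficients `(n+1) uₙ₊₁` (it is the derivative of
`F(a,a;1;·)`), and `F(a-1,a;1;·)` has coefficients `(a-1) (a)ₙ (a)ₙ₊₁ / (n+1)!²` at `n+1`. The
coefficient identity is then a polynomial identity in `a` and `n`. Convergence of the three
series for `|z| < 1` comes from the ratio test.
-/

/-- The Gauss hypergeometric function `₂F₁(a,b;c;z) = ∑ (a)ₙ(b)ₙ/((c)ₙ n!) zⁿ`. -/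
noncomputable def hyp (a b c z : ℂ) : ℂ :=
  ∑' n : ℕ, ((ascPochhammer ℂ n).eval a * (ascPochhammer ℂ n).eval b /
    ((ascPochhammer ℂ n).eval c * (n.factorial : ℂ))) * z ^ n

open Filter Topology

/-- The `n`-th coefficient of the Gauss series. -/
noncomputable def hypCoeff (a b c : ℂ) (n : ℕ) : ℂ :=
  (ascPochhammer ℂ n).eval a * (ascPochhammer ℂ n).eval b /
    ((ascPochhammer ℂ n).eval c * (n.factorial : ℂ))

/-- This also holds when `c + n = 0`: both sides are then `0`. -/
lemma hypCoeff_succ (a b c : ℂ) (n : ℕ) :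
    hypCoeff a b c (n + 1) =
      hypCoeff a b c n * ((a + n) / (c + n) * ((b + n) / (1 + n))) := by
  simp only [hypCoeff, ascPochhammer_succ_eval, Nat.factorial_succ, div_mul_div_comm]
  push_cast
  congr 1 <;> ring

lemma tendsto_add_nat_div_add_nat (a c : ℂ) :
    Tendsto (fun n : ℕ => (a + n) / (c + n)) atTop (𝓝 1) := by
  simpa using tendsto_add_mul_div_add_mul_atTop_nhds a c (1 : ℂ) (one_ne_zero : (1 : ℂ) ≠ 0)

lemma summable_hyp (a b c z : ℂ) (hz : ‖z‖ < 1) :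
    Summable fun n : ℕ => hypCoeff a b c n * z ^ n := by
  obtain ⟨r, hzr, hr⟩ := exists_between hz
  refine summable_of_ratio_norm_eventually_le hr ?_
  have h : Tendsto (fun n : ℕ => ‖(a + n) / (c + n) * ((b + n) / (1 + n)) * z‖) atTop
      (𝓝 ‖z‖) := by
    simpa using (((tendsto_add_nat_div_add_nat a c).mul
      (tendsto_add_nat_div_add_nat b 1)).mul_const z).norm
  filter_upwards [h.eventually_le_const hzr] with n hn
  calc ‖hypCoeff a b c (n + 1) * z ^ (n + 1)‖
      = ‖(a + n) / (c + n) * ((b + n) / (1 + n)) * z‖ * ‖hypCoeff a b c n * z ^ n‖ := by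
        rw [hypCoeff_succ, ← norm_mul]
        congr 1
        ring
    _ ≤ r * ‖hypCoeff a b c n * z ^ n‖ := by gcongr

lemma mul_ascPochhammer_eval_add_one (a : ℂ) (n : ℕ) :
    a * (ascPochhammer ℂ n).eval (a + 1) = (ascPochhammer ℂ (n + 1)).eval a := by
  simp [ascPochhammer_succ_left]

lemma hypCoeff_one (a b : ℂ) (n : ℕ) :
    hypCoeff a b 1 n =
      (ascPochhammer ℂ n).eval a * (ascPochhammer ℂ n).eval b / (n.factorial : ℂ) ^ 2 := by
  rw [hypCoeff, ascPochhammer_eval_one, sq]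

/-- Coefficient form of `d/dz F(a,a;1;z) = a² F(a+1,a+1;2;z)`. -/
lemma sq_mul_hypCoeff_two (a : ℂ) (n : ℕ) :
    a ^ 2 * hypCoeff (a + 1) (a + 1) 2 n = (n + 1) * hypCoeff a a 1 (n + 1) := by
  have h2 : (ascPochhammer ℂ n).eval 2 = ((n + 1).factorial : ℂ) := by
    rw [← ascPochhammer_eval_one, ← mul_ascPochhammer_eval_add_one, one_mul, one_add_one_eq_two]
  have hn : (n.factorial : ℂ) ≠ 0 := by exact_mod_cast n.factorial_ne_zero
  have hn1 : (n : ℂ) + 1 ≠ 0 := by exact_mod_cast n.succ_ne_zero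
  rw [hypCoeff_one, hypCoeff, h2, ← mul_ascPochhammer_eval_add_one, Nat.factorial_succ]
  push_cast
  field_simp

/-- The contiguous relation on the coefficient of `z ^ (n + 1)`. -/
lemma hypCoeff_contiguous (a : ℂ) (n : ℕ) :
    (n + 1) * hypCoeff a a 1 (n + 1) - n * hypCoeff a a 1 n =
      (1 - a) * hypCoeff (a - 1) a 1 (n + 1) + a * hypCoeff a a 1 n
        - (1 - a) * hypCoeff a a 1 (n + 1) := by
  have hn : (n.factorial : ℂ) ≠ 0 := by exact_mod_cast n.factorial_ne_zero
  have hn1 : (n : ℂ) + 1 ≠ 0 := by exact_mod_cast n.succ_ne_zero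
  have h := mul_ascPochhammer_eval_add_one (a - 1) n
  rw [sub_add_cancel] at h
  simp only [hypCoeff_one, ← h]
  simp only [ascPochhammer_succ_eval, Nat.factorial_succ]
  push_cast
  field_simp
  ring

lemma hyp_contiguous (a z : ℂ) (hz : ‖z‖ < 1) :
    z * (1 - z) * (a ^ 2 * hyp (a + 1) (a + 1) 2 z) =
      (1 - a) * hyp (a - 1) a 1 z + (a * z - (1 - a)) * hyp a a 1 z := by
  have hW : HasSum (fun n : ℕ => (n + 1) * hypCoeff a a 1 (n + 1) * z ^ n)
      (a ^ 2 * hyp (a + 1) (a + 1) 2 z) := by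
    have h : HasSum (fun n : ℕ => hypCoeff (a + 1) (a + 1) 2 n * z ^ n)
        (hyp (a + 1) (a + 1) 2 z) := (summable_hyp (a + 1) (a + 1) 2 z hz).hasSum
    simpa only [← sq_mul_hypCoeff_two, mul_assoc] using h.mul_left (a ^ 2)
  have hU : HasSum (fun n : ℕ => hypCoeff a a 1 n * z ^ n) (hyp a a 1 z) :=
    (summable_hyp a a 1 z hz).hasSum
  have hV : HasSum (fun n : ℕ => hypCoeff (a - 1) a 1 n * z ^ n) (hyp (a - 1) a 1 z) :=
    (summable_hyp (a - 1) a 1 z hz).hasSum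
  -- The Euler operator `z d/dz` applied to the series of `F(a,a;1;z)`.
  have hE : HasSum (fun n : ℕ => n * hypCoeff a a 1 n * z ^ n)
      (z * (a ^ 2 * hyp (a + 1) (a + 1) 2 z)) := by
    rw [← hasSum_nat_add_iff' 1]
    simpa [pow_succ, mul_assoc, mul_comm, mul_left_comm] using hW.mul_left z
  have hU1 := (hasSum_nat_add_iff' 1).2 hU
  have hV1 := (hasSum_nat_add_iff' 1).2 hV
  have hL := (hW.mul_left z).sub (hE.mul_left z)
  have hR := ((hV1.mul_left (1 - a)).add (hU.mul_left (a * z))).sub (hU1.mul_left (1 - a))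
  have key := hL.unique (hR.congr_fun fun n => by
    linear_combination z ^ (n + 1) * hypCoeff_contiguous a n)
  simp [hypCoeff] at key
  linear_combination key

/-- contiguous-relation identity for the Gauss hypergeometric function used
to rewrite the kernel `K₀` of the Klein–Gordon equation in de Sitter space-time. -/
theorem hyp_contiguous_identity (H : ℝ) (hH : 0 < H) (M : ℂ) (hM : 2 * M ≠ (H : ℂ))
    (z : ℝ) (hz : z ∈ Set.Ioo (0 : ℝ) 1) :
    hyp (3 / 2 - M / (H : ℂ)) (3 / 2 - M / (H : ℂ)) 2 (z : ℂ) =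
      -(2 * (H : ℂ) / (((z : ℂ) - 1) * (z : ℂ) * ((H : ℂ) - 2 * M) ^ 2)) *
        (((H : ℂ) + 2 * M) * hyp (-(1 / 2) - M / (H : ℂ)) (1 / 2 - M / (H : ℂ)) 1 (z : ℂ) +
          ((H : ℂ) * ((z : ℂ) - 1) - 2 * M * ((z : ℂ) + 1)) *
            hyp (1 / 2 - M / (H : ℂ)) (1 / 2 - M / (H : ℂ)) 1 (z : ℂ)) := by
  have hH0 : (H : ℂ) ≠ 0 := by exact_mod_cast hH.ne'
  have hz0 : (z : ℂ) ≠ 0 := by exact_mod_cast hz.1.ne'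
  have hz1 : (z : ℂ) - 1 ≠ 0 := sub_ne_zero.2 (by exact_mod_cast hz.2.ne)
  have hHM : (H : ℂ) - 2 * M ≠ 0 := sub_ne_zero.2 hM.symm
  have hnorm : ‖(z : ℂ)‖ < 1 := by
    rw [Complex.norm_real, Real.norm_of_nonneg hz.1.le]
    exact hz.2
  obtain ⟨a, ha⟩ : ∃ a : ℂ, a = 1 / 2 - M / H := ⟨_, rfl⟩
  have hMa : M = H * (1 / 2 - a) := by
    rw [ha]
    field_simp
    ring
  have e1 : 3 / 2 - M / (H : ℂ) = a + 1 := by rw [ha]; ring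
  have e2 : -(1 / 2) - M / (H : ℂ) = a - 1 := by rw [ha]; ring
  have key := hyp_contiguous a z hnorm
  rw [e1, e2, ← ha, ← neg_div, div_mul_eq_mul_div, eq_div_iff (by positivity)]
  rw [hMa]
  linear_combination -4 * (H : ℂ) ^ 2 * key
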